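/- arXiv:2007.08079 — 2 statements merged into one kernel-verified Lean document; each statement's English description precedes it below -/
import Mathlib

section
/- Let E be a centered ellipsoid in ℝⁿ with semiaxes a₁,…,aₙ > 0. For every real number i with n < i < n+2, Ṽ_i(E) = (4π^{n/2} / (n Γ((n−i)/2) Γ(i/2))) · ∫₀^∞ u^{i−1} · ( ((1 + u²/a₁²)⋯(1 + u²/aₙ²))^{−1/2} − a₁⋯aₙ/uⁿ ) du, where Γ((n−i)/2) is the value of the Gamma function extended to negative non-integer arguments via Γ(z) = Γ(z+1)/z. -/
open MeasureTheory Real Set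

noncomputable def sphereMeasure (n : ℕ) :
    Measure (Metric.sphere (0 : EuclideanSpace ℝ (Fin n)) 1) :=
  (volume : Measure (EuclideanSpace ℝ (Fin n))).toSphere

noncomputable def radial {n : ℕ} (K : Set (EuclideanSpace ℝ (Fin n)))
    (x : EuclideanSpace ℝ (Fin n)) : ℝ :=
  sSup {t : ℝ | 0 ≤ t ∧ t • x ∈ K}

noncomputable def dualVolume (n : ℕ) (i : ℝ) (K : Set (EuclideanSpace ℝ (Fin n))) : ℝ :=
  (1 / n) * ∫ θ : Metric.sphere (0 : EuclideanSpace ℝ (Fin n)) 1,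
    radial K (θ : EuclideanSpace ℝ (Fin n)) ^ i ∂(sphereMeasure n)

def ellipsoidSet {n : ℕ} (a : Fin n → ℝ) : Set (EuclideanSpace ℝ (Fin n)) :=
  {x | ∑ j, (x j) ^ 2 / (a j) ^ 2 ≤ 1}

lemma polar_sep {n : ℕ} (hn : 0 < n) (F : EuclideanSpace ℝ (Fin n) → ℝ)
    (f : EuclideanSpace ℝ (Fin n) → ℝ) (g : ℝ → ℝ)
    (hf : Integrable (fun θ : Metric.sphere (0 : EuclideanSpace ℝ (Fin n)) 1 => f θ)
      (sphereMeasure n))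
    (hg : IntegrableOn (fun y : ℝ => y ^ (n - 1) * g y) (Ioi 0))
    (hF : ∀ x, x ≠ 0 → F x = f (‖x‖⁻¹ • x) * g ‖x‖) :
    Integrable F ∧ ∫ x, F x = (∫ θ : Metric.sphere (0 : EuclideanSpace ℝ (Fin n)) 1, f θ
      ∂(sphereMeasure n)) * ∫ y in Ioi (0 : ℝ), y ^ (n - 1) * g y := by
  have : Nonempty (Fin n) := ⟨⟨0, hn⟩⟩
  have : Nontrivial (EuclideanSpace ℝ (Fin n)) := inferInstance
  have hdim : Module.finrank ℝ (EuclideanSpace ℝ (Fin n)) = n := by simp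
  have hmp := (volume : Measure (EuclideanSpace ℝ (Fin n))).measurePreserving_homeomorphUnitSphereProd
  rw [hdim] at hmp
  let G : (Metric.sphere (0 : EuclideanSpace ℝ (Fin n)) 1) × (Ioi (0 : ℝ)) → ℝ :=
    fun p => f p.1 * g p.2
  have hcomp : ∀ x : ({(0)}ᶜ : Set (EuclideanSpace ℝ (Fin n))),
      G (homeomorphUnitSphereProd _ x) = F x := by
    intro x
    rw [hF x.1 x.2]
    simp [G]
  have hgi : Integrable (fun y : Ioi (0 : ℝ) => g y) (Measure.volumeIoiPow (n - 1)) := by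
    rw [Measure.volumeIoiPow, integrable_withDensity_iff_integrable_smul']
    · rw [integrableOn_iff_comap_subtypeVal measurableSet_Ioi] at hg
      refine hg.congr (.of_forall ?_)
      rintro ⟨x, hx : 0 < x⟩
      simp (disch := positivity) [ENNReal.toReal_ofReal]
    · fun_prop
    · simp
  have hgint : ∫ y : Ioi (0 : ℝ), g y ∂(Measure.volumeIoiPow (n - 1)) =
      ∫ y in Ioi (0 : ℝ), y ^ (n - 1) * g y := by
    simp only [Measure.volumeIoiPow, ENNReal.ofReal]
    rw [integral_withDensity_eq_integral_smul,
        integral_subtype_comap measurableSet_Ioi fun a ↦ Real.toNNReal (a ^ (n - 1)) • g a,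
        setIntegral_congr_fun measurableSet_Ioi fun x hx ↦ ?_]
    · rw [NNReal.smul_def, Real.coe_toNNReal _ (pow_nonneg hx.out.le _)]; rfl
    · exact (measurable_subtype_coe.pow_const _).real_toNNReal
  have hGi : Integrable G ((sphereMeasure n).prod (Measure.volumeIoiPow (n - 1))) := 
    Integrable.mul_prod (μ := sphereMeasure n) (f := fun θ => f θ) (g := fun y : Ioi (0:ℝ) => g y) hf hgi
  constructor
  · rw [← restrict_compl_singleton (μ := volume) (0 : EuclideanSpace ℝ (Fin n)), ← IntegrableOn,
      integrableOn_iff_comap_subtypeVal (by measurability)]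
    refine ((hmp.integrable_comp_emb (Homeomorph.measurableEmbedding _)).2 hGi).congr
      (.of_forall hcomp)
  · calc ∫ x, F x = ∫ x : ({(0)}ᶜ : Set (EuclideanSpace ℝ (Fin n))), F x
          ∂(Measure.comap Subtype.val volume) := by
          rw [integral_subtype_comap (measurableSet_singleton _).compl F,
            restrict_compl_singleton]
      _ = ∫ x, G x ∂((sphereMeasure n).prod (Measure.volumeIoiPow (n - 1))) := by
          rw [sphereMeasure, ← hmp.integral_comp (Homeomorph.measurableEmbedding _) G]
          exact integral_congr_ae (.of_forall fun x => (hcomp x).symm)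
      _ = _ := by
          rw [← hgint]
          have : SFinite (sphereMeasure n) := by unfold sphereMeasure; infer_instance
          exact integral_prod_mul (μ := sphereMeasure n) (fun θ => f θ) (fun y : Ioi (0:ℝ) => g y)

lemma gauss_sum {n : ℕ} (b : Fin n → ℝ) (hb : ∀ j, 0 < b j) :
    Integrable (fun x : EuclideanSpace ℝ (Fin n) => rexp (-∑ j, b j * (x j) ^ 2)) ∧
    ∫ x : EuclideanSpace ℝ (Fin n), rexp (-∑ j, b j * (x j) ^ 2) = ∏ j, √(π / b j) := by
  have h : ∀ y : Fin n → ℝ, rexp (-∑ j, b j * (y j) ^ 2) = ∏ j, rexp (- b j * (y j) ^ 2) := by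
    intro y
    rw [← Real.exp_sum, ← Finset.sum_neg_distrib]
    simp
  constructor
  · rw [← (PiLp.volume_preserving_toLp (Fin n)).integrable_comp_emb
      (MeasurableEquiv.toLp 2 _).measurableEmbedding]
    simp only [Function.comp_def, h]
    exact Integrable.fintype_prod (f := fun j (v : ℝ) => rexp (- b j * v ^ 2))
      (fun j => integrable_exp_neg_mul_sq (hb j))
  · rw [← (PiLp.volume_preserving_toLp (Fin n)).integral_comp
      (MeasurableEquiv.toLp 2 _).measurableEmbedding]
    simp only [h]
    rw [integral_fintype_prod_volume_eq_prod (f := fun j (v : ℝ) => rexp (- b j * v ^ 2))]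
    simp only [integral_gaussian]

lemma one_sub_exp_integrable (s : ℝ) (h0 : -2 < s) (h1 : s < 0) :
    IntegrableOn (fun r : ℝ => r ^ (s - 1) * (1 - rexp (-r ^ 2))) (Ioi 0) := by
  have hm : Measurable (fun r : ℝ => r ^ (s - 1) * (1 - rexp (-r ^ 2))) := by fun_prop
  have hnn : ∀ r : ℝ, 0 ≤ 1 - rexp (-r ^ 2) := fun r => by
    have : rexp (-r ^ 2) ≤ 1 := Real.exp_le_one_iff.2 (by nlinarith [sq_nonneg r])
    linarith
  rw [← Ioc_union_Ioi_eq_Ioi zero_le_one, integrableOn_union]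
  constructor
  · have : IntegrableOn (fun r : ℝ => r ^ (s + 1)) (Ioc 0 1) :=
      (intervalIntegrable_iff_integrableOn_Ioc_of_le zero_le_one).1
        (intervalIntegral.intervalIntegrable_rpow' (by linarith))
    refine Integrable.mono' this hm.aestronglyMeasurable ?_
    filter_upwards [ae_restrict_mem measurableSet_Ioc] with r hr
    have hr0 : 0 < r := hr.1
    rw [Real.norm_of_nonneg (mul_nonneg (by positivity) (hnn r))]
    calc r ^ (s - 1) * (1 - rexp (-r ^ 2)) ≤ r ^ (s - 1) * r ^ 2 := by
          gcongr
          linarith [Real.add_one_le_exp (-r ^ 2)]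
      _ = r ^ (s + 1) := by
          rw [← Real.rpow_natCast, ← Real.rpow_add hr0]; congr 1; push_cast; ring
  · have : IntegrableOn (fun r : ℝ => r ^ (s - 1)) (Ioi 1) :=
      integrableOn_Ioi_rpow_of_lt (by linarith) one_pos
    refine Integrable.mono' this hm.aestronglyMeasurable ?_
    filter_upwards [ae_restrict_mem measurableSet_Ioi] with r hr
    have hr0 : 0 < r := one_pos.trans hr
    rw [Real.norm_of_nonneg (mul_nonneg (by positivity) (hnn r))]
    have := Real.exp_pos (-r ^ 2)
    have h2 : 0 ≤ r ^ (s - 1) := by positivity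
    nlinarith

lemma one_sub_exp_integral (s : ℝ) (h0 : -2 < s) (h1 : s < 0) :
    ∫ r in Ioi (0 : ℝ), r ^ (s - 1) * (1 - rexp (-r ^ 2)) = - (1 / 2) * Real.Gamma (s / 2) := by
  have hI := one_sub_exp_integrable s h0 h1
  have hJ : IntegrableOn (fun r : ℝ => r ^ (s + 1) * rexp (-1 * r ^ 2)) (Ioi 0) :=
    integrableOn_rpow_mul_exp_neg_mul_sq one_pos (by linarith)
  have hJv : ∫ r in Ioi (0 : ℝ), r ^ (s + 1) * rexp (-1 * r ^ 2) =
      (1 / 2) * Real.Gamma (s / 2 + 1) := by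
    have := integral_rpow_mul_exp_neg_mul_rpow (p := 2) (q := s + 1) (b := 1) two_pos
      (by linarith) one_pos
    simp only [Real.rpow_two] at this
    rw [this, Real.one_rpow, one_mul]
    congr 2; ring
  have hnn : ∀ r : ℝ, 0 ≤ 1 - rexp (-r ^ 2) := fun r => by
    have : rexp (-r ^ 2) ≤ 1 := Real.exp_le_one_iff.2 (by nlinarith [sq_nonneg r])
    linarith
  have key : ∫ r in Ioi (0 : ℝ), (s * (r ^ (s - 1) * (1 - rexp (-r ^ 2))) +
      2 * (r ^ (s + 1) * rexp (-1 * r ^ 2))) = 0 - (0 : ℝ) ^ s * (1 - rexp (-0 ^ 2)) := by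
    refine integral_Ioi_of_hasDerivAt_of_tendsto (f := fun r : ℝ => r ^ s * (1 - rexp (-r ^ 2)))
      ?_ ?_ ((hI.const_mul s).add (hJ.const_mul 2)) ?_
    · rw [← continuousWithinAt_Ioi_iff_Ici]
      unfold ContinuousWithinAt
      have hz : (0 : ℝ) ^ s * (1 - rexp (-0 ^ 2)) = 0 := by simp
      change Filter.Tendsto _ _ (nhds ((0 : ℝ) ^ s * (1 - rexp (-0 ^ 2))))
      rw [hz]
      have hlim : Filter.Tendsto (fun r : ℝ => r ^ (s + 2)) (nhdsWithin 0 (Ioi 0)) (nhds 0) := by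
        have := (Real.continuousAt_rpow_const 0 (s + 2) (Or.inr (by linarith))).tendsto
        rw [Real.zero_rpow (by linarith)] at this
        exact this.mono_left nhdsWithin_le_nhds
      refine squeeze_zero' ?_ ?_ hlim
      · filter_upwards [self_mem_nhdsWithin] with r hr
        have hr0 : 0 < r := hr
        exact mul_nonneg (by positivity) (hnn r)
      · filter_upwards [self_mem_nhdsWithin] with r hr
        have hr0 : 0 < r := hr
        calc r ^ s * (1 - rexp (-r ^ 2)) ≤ r ^ s * r ^ 2 := by
              gcongr
              linarith [Real.add_one_le_exp (-r ^ 2)]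
          _ = r ^ (s + 2) := by
              rw [← Real.rpow_natCast, ← Real.rpow_add hr0]; congr 1
    · intro r hr
      have hr0 : 0 < r := hr
      have d1 := Real.hasDerivAt_rpow_const (x := r) (p := s) (Or.inl hr0.ne')
      have d2 : HasDerivAt (fun r : ℝ => 1 - rexp (-r ^ 2)) (rexp (-r^2) * (2 * r)) r := by
        have := (((hasDerivAt_pow 2 r).neg).exp).const_sub 1
        convert! this using 1
        simp
      convert! d1.mul d2 using 1
      rw [Real.rpow_add hr0, Real.rpow_one, neg_one_mul]; ring
    · have hlim : Filter.Tendsto (fun r : ℝ => r ^ s) Filter.atTop (nhds 0) := by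
        have := tendsto_rpow_neg_atTop (y := -s) (by linarith)
        simpa using this
      refine squeeze_zero' ?_ ?_ hlim
      · filter_upwards [Filter.eventually_gt_atTop 0] with r hr0
        exact mul_nonneg (by positivity) (hnn r)
      · filter_upwards [Filter.eventually_gt_atTop 0] with r hr0
        have := Real.exp_pos (-r ^ 2)
        have h2 : 0 ≤ r ^ s := by positivity
        nlinarith
  rw [integral_add (hI.const_mul s) (hJ.const_mul 2), integral_const_mul, integral_const_mul,
    hJv, Real.Gamma_add_one (by linarith)] at key
  have hs : s ≠ 0 := h1.ne
  simp at key
  have : s * ((∫ r in Ioi (0 : ℝ), r ^ (s - 1) * (1 - rexp (-r ^ 2))) + (1 / 2) * Real.Gamma (s / 2)) = 0 := by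
    linarith
  rcases mul_eq_zero.1 this with h | h
  · exact absurd h hs
  · linarith

/-- The quadratic form of the ellipsoid. -/
noncomputable def qf {n : ℕ} (a : Fin n → ℝ) (x : EuclideanSpace ℝ (Fin n)) : ℝ :=
  ∑ j, (x j) ^ 2 / (a j) ^ 2

lemma qf_pos {n : ℕ} (a : Fin n → ℝ) (ha : ∀ j, 0 < a j) (x : EuclideanSpace ℝ (Fin n))
    (hx : x ≠ 0) : 0 < qf a x := by
  obtain ⟨j, hj⟩ : ∃ j, x j ≠ 0 := by
    by_contra! h
    exact hx (by ext j; simpa using h j)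
  refine Finset.sum_pos' (fun k _ => by positivity) ⟨j, Finset.mem_univ _, ?_⟩
  have := ha j
  positivity

lemma qf_smul {n : ℕ} (a : Fin n → ℝ) (t : ℝ) (x : EuclideanSpace ℝ (Fin n)) :
    qf a (t • x) = t ^ 2 * qf a x := by
  simp only [qf, Finset.mul_sum, PiLp.smul_apply, smul_eq_mul]
  exact Finset.sum_congr rfl fun j _ => by ring

lemma qf_continuous {n : ℕ} (a : Fin n → ℝ) : Continuous (qf a) := by
  unfold qf; fun_prop

lemma radial_eq {n : ℕ} (a : Fin n → ℝ) (ha : ∀ j, 0 < a j) (x : EuclideanSpace ℝ (Fin n))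
    (hx : x ≠ 0) : radial (ellipsoidSet a) x = (√(qf a x))⁻¹ := by
  have hq := qf_pos a ha x hx
  have hs : 0 < √(qf a x) := Real.sqrt_pos.2 hq
  have : {t : ℝ | 0 ≤ t ∧ t • x ∈ ellipsoidSet a} = Icc 0 (√(qf a x))⁻¹ := by
    ext t
    have h1 : t • x ∈ ellipsoidSet a ↔ t ^ 2 * qf a x ≤ 1 := by
      rw [← qf_smul]; rfl
    simp only [mem_ofPred_eq, mem_Icc, h1]
    refine and_congr_right fun ht => ?_
    rw [← one_div, le_div_iff₀ hs]
    have h2 : t ^ 2 * qf a x = (t * √(qf a x)) ^ 2 := by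
      rw [mul_pow, Real.sq_sqrt hq.le]
    rw [h2, sq_le_one_iff₀ (by positivity)]
  rw [radial, this, csSup_Icc (by positivity)]

lemma radial_rpow {n : ℕ} (a : Fin n → ℝ) (ha : ∀ j, 0 < a j) (x : EuclideanSpace ℝ (Fin n))
    (hx : x ≠ 0) (i : ℝ) : radial (ellipsoidSet a) x ^ i = qf a x ^ (-i / 2) := by
  have hq := qf_pos a ha x hx
  rw [radial_eq a ha x hx, Real.sqrt_eq_rpow, ← Real.rpow_neg hq.le, ← Real.rpow_mul hq.le]
  congr 1; ring

lemma gauss_diff {n : ℕ} (a : Fin n → ℝ) (ha : ∀ j, 0 < a j) (u : ℝ) (hu : 0 < u) :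
    ∫ x : EuclideanSpace ℝ (Fin n), (1 - rexp (-‖x‖ ^ 2)) * rexp (-qf a x * u ^ 2) =
      - (π ^ ((n : ℝ) / 2) *
        ((∏ j, (1 + u ^ 2 / (a j) ^ 2)) ^ (-(1 : ℝ) / 2) - (∏ j, a j) / u ^ n)) := by
  have p1 : ∀ j, 0 < u ^ 2 / (a j) ^ 2 := fun j => by have := ha j; positivity
  have p2 : ∀ j, 0 < 1 + u ^ 2 / (a j) ^ 2 := fun j => by have := p1 j; positivity
  obtain ⟨i1, e1⟩ := gauss_sum _ p1
  obtain ⟨i2, e2⟩ := gauss_sum _ p2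
  have h : ∀ x : EuclideanSpace ℝ (Fin n), (1 - rexp (-‖x‖ ^ 2)) * rexp (-qf a x * u ^ 2) =
      rexp (-∑ j, u ^ 2 / (a j) ^ 2 * (x j) ^ 2) -
        rexp (-∑ j, (1 + u ^ 2 / (a j) ^ 2) * (x j) ^ 2) := by
    intro x
    have q1 : -qf a x * u ^ 2 = -∑ j, u ^ 2 / (a j) ^ 2 * (x j) ^ 2 := by
      rw [qf, neg_mul, Finset.sum_mul]
      congr 1
      exact Finset.sum_congr rfl fun j _ => by ring
    have q2 : -∑ j, (1 + u ^ 2 / (a j) ^ 2) * (x j) ^ 2 =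
        -‖x‖ ^ 2 + -∑ j, u ^ 2 / (a j) ^ 2 * (x j) ^ 2 := by
      rw [EuclideanSpace.norm_sq_eq, ← neg_add, ← Finset.sum_add_distrib]
      congr 1
      exact Finset.sum_congr rfl fun j _ => by rw [Real.norm_eq_abs, sq_abs]; ring
    rw [q1, q2, Real.exp_add]; ring
  simp only [h]
  rw [integral_sub i1 i2, e1, e2]
  have hpi : π ^ ((n : ℝ) / 2) = ∏ _j : Fin n, √π := by
    rw [Finset.prod_const, Finset.card_univ, Fintype.card_fin, Real.sqrt_eq_rpow,
      ← Real.rpow_natCast, ← Real.rpow_mul Real.pi_pos.le]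
    congr 1; ring
  have r1 : ∏ j, √(π / (u ^ 2 / (a j) ^ 2)) = π ^ ((n : ℝ) / 2) * ((∏ j, a j) / u ^ n) := by
    have : u ^ n = ∏ _j : Fin n, u := by simp
    rw [hpi, this, ← Finset.prod_div_distrib, ← Finset.prod_mul_distrib]
    refine Finset.prod_congr rfl fun j _ => ?_
    have := ha j
    rw [Real.sqrt_div Real.pi_pos.le, ← div_pow, Real.sqrt_sq (by positivity)]
    field_simp
  have r2 : ∏ j, √(π / (1 + u ^ 2 / (a j) ^ 2)) = π ^ ((n : ℝ) / 2) *
      (∏ j, (1 + u ^ 2 / (a j) ^ 2)) ^ (-(1 : ℝ) / 2) := by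
    rw [hpi, ← Real.finsetProd_rpow _ _ (fun j _ => (p2 j).le), ← Finset.prod_mul_distrib]
    refine Finset.prod_congr rfl fun j _ => ?_
    rw [Real.sqrt_div Real.pi_pos.le, neg_div, Real.rpow_neg (p2 j).le, ← Real.sqrt_eq_rpow]
    rfl
  rw [r1, r2]; ring

lemma radial_part {n : ℕ} (hn : 0 < n) (a : Fin n → ℝ) (ha : ∀ j, 0 < a j)
    (i : ℝ) (hi0 : (n : ℝ) < i) (hin : i < (n : ℝ) + 2) :
    Integrable (fun x : EuclideanSpace ℝ (Fin n) => (1 - rexp (-‖x‖ ^ 2)) * qf a x ^ (-i / 2)) ∧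
    ∫ x : EuclideanSpace ℝ (Fin n), (1 - rexp (-‖x‖ ^ 2)) * qf a x ^ (-i / 2) =
      (∫ θ : Metric.sphere (0 : EuclideanSpace ℝ (Fin n)) 1,
        qf a (θ : EuclideanSpace ℝ (Fin n)) ^ (-i / 2) ∂(sphereMeasure n)) *
      (- (1 / 2) * Real.Gamma (((n : ℝ) - i) / 2)) := by
  have hEq : EqOn (fun y : ℝ => y ^ ((n : ℝ) - i - 1) * (1 - rexp (-y ^ 2)))
      (fun y : ℝ => y ^ (n - 1) * (y ^ (-i) * (1 - rexp (-y ^ 2)))) (Ioi 0) := by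
    intro y hy
    have hy0 : 0 < y := hy
    simp only
    rw [← mul_assoc, ← Real.rpow_natCast y (n - 1), ← Real.rpow_add hy0, Nat.cast_pred hn]
    congr 2; ring
  rw [← one_sub_exp_integral (n - i) (by linarith) (by linarith),
    setIntegral_congr_fun measurableSet_Ioi hEq]
  have : IsFiniteMeasure (sphereMeasure n) := by unfold sphereMeasure; infer_instance
  refine polar_sep hn _ (fun x => qf a x ^ (-i / 2)) (fun y => y ^ (-i) * (1 - rexp (-y ^ 2)))
    ?_ ?_ ?_
  · have hc : Continuous (fun θ : Metric.sphere (0 : EuclideanSpace ℝ (Fin n)) 1 =>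
        qf a (θ : EuclideanSpace ℝ (Fin n)) ^ (-i / 2)) := by
      refine Continuous.rpow_const ((qf_continuous a).comp continuous_subtype_val) fun θ => ?_
      exact Or.inl (qf_pos a ha _ (ne_zero_of_mem_unit_sphere θ)).ne'
    exact hc.integrable_of_hasCompactSupport (HasCompactSupport.of_compactSpace _)
  · exact (one_sub_exp_integrable (n - i) (by linarith) (by linarith)).congr_fun hEq
      measurableSet_Ioi
  · intro x hx
    have hx0 : 0 < ‖x‖ := norm_pos_iff.2 hx
    have hq := qf_pos a ha x hx
    have : (‖x‖⁻¹ ^ 2) ^ (-i / 2) * ‖x‖ ^ (-i) = 1 := by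
      rw [inv_pow, Real.inv_rpow (by positivity), ← Real.rpow_natCast, ← Real.rpow_mul hx0.le]
      have : ((2 : ℕ) : ℝ) * (-i / 2) = -i := by push_cast; ring
      rw [this]
      exact inv_mul_cancel₀ (by positivity)
    rw [qf_smul, Real.mul_rpow (by positivity) hq.le]
    linear_combination (-(1 - rexp (-‖x‖ ^ 2)) * qf a x ^ (-i / 2)) * this

lemma moment_fubini {n : ℕ} (hn : 0 < n) (a : Fin n → ℝ) (ha : ∀ j, 0 < a j)
    (i : ℝ) (hi0 : (n : ℝ) < i) (hin : i < (n : ℝ) + 2) :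
    ∫ u in Ioi (0 : ℝ), ∫ x : EuclideanSpace ℝ (Fin n),
      u ^ (i - 1) * ((1 - rexp (-‖x‖ ^ 2)) * rexp (-qf a x * u ^ 2)) =
    (∫ x : EuclideanSpace ℝ (Fin n), (1 - rexp (-‖x‖ ^ 2)) * qf a x ^ (-i / 2)) *
      (1 / 2 * Real.Gamma (i / 2)) := by
  have : Nonempty (Fin n) := ⟨⟨0, hn⟩⟩
  have : Nontrivial (EuclideanSpace ℝ (Fin n)) := inferInstance
  have hi : 0 < i := lt_of_le_of_lt (Nat.cast_nonneg n) hi0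
  have hnn : ∀ r : ℝ, 0 ≤ 1 - rexp (-r ^ 2) := fun r => by
    have : rexp (-r ^ 2) ≤ 1 := Real.exp_le_one_iff.2 (by nlinarith [sq_nonneg r])
    linarith
  have hne : ∀ᵐ x : EuclideanSpace ℝ (Fin n), x ≠ 0 :=
    compl_mem_ae_iff.2 (measure_singleton 0)
  have hinner : ∀ x : EuclideanSpace ℝ (Fin n), x ≠ 0 →
      ∫ u in Ioi (0 : ℝ), u ^ (i - 1) * ((1 - rexp (-‖x‖ ^ 2)) * rexp (-qf a x * u ^ 2)) =
      (1 - rexp (-‖x‖ ^ 2)) * qf a x ^ (-i / 2) * (1 / 2 * Real.Gamma (i / 2)) := by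
    intro x hx
    have h := integral_rpow_mul_exp_neg_mul_rpow (p := 2) (q := i - 1) (b := qf a x) two_pos
      (by linarith) (qf_pos a ha x hx)
    simp only [Real.rpow_two, sub_add_cancel] at h
    simp only [mul_left_comm _ (1 - rexp (-‖x‖ ^ 2))]
    rw [integral_const_mul, h]; ring
  have hmeas : Measurable (fun p : EuclideanSpace ℝ (Fin n) × ℝ =>
      p.2 ^ (i - 1) * ((1 - rexp (-‖p.1‖ ^ 2)) * rexp (-qf a p.1 * p.2 ^ 2))) := by
    have := (qf_continuous a).measurable
    fun_prop
  have hint : Integrable (fun p : EuclideanSpace ℝ (Fin n) × ℝ =>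
      p.2 ^ (i - 1) * ((1 - rexp (-‖p.1‖ ^ 2)) * rexp (-qf a p.1 * p.2 ^ 2)))
      ((volume : Measure (EuclideanSpace ℝ (Fin n))).prod (volume.restrict (Ioi (0 : ℝ)))) := by
    rw [integrable_prod_iff hmeas.aestronglyMeasurable]
    constructor
    · filter_upwards [hne] with x hx
      simp only [mul_left_comm _ (1 - rexp (-‖x‖ ^ 2))]
      exact (integrableOn_rpow_mul_exp_neg_mul_sq (qf_pos a ha x hx) (by linarith)).const_mul _
    · refine ((radial_part hn a ha i hi0 hin).1.mul_const (1 / 2 * Real.Gamma (i / 2))).congr ?_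
      filter_upwards [hne] with x hx
      rw [← hinner x hx]
      refine setIntegral_congr_fun measurableSet_Ioi fun u hu => ?_
      have hu0 : 0 < u := hu
      have := hnn ‖x‖
      exact (Real.norm_of_nonneg (by positivity)).symm
  rw [← integral_mul_const, ← integral_integral_swap (f := fun (x : EuclideanSpace ℝ (Fin n)) (u : ℝ) =>
    u ^ (i - 1) * ((1 - rexp (-‖x‖ ^ 2)) * rexp (-qf a x * u ^ 2))) hint]
  refine integral_congr_ae ?_
  filter_upwards [hne] with x hx
  exact hinner x hx

/-- Moment representation of the dual volume `Ṽ_i` of a centered ellipsoid, for `n < i < n+2`.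
Here `Real.Gamma` is the Gamma function extended to negative non-integer arguments by the
recursion `Γ(z) = Γ(z+1)/z`. -/
theorem dualVolume_moment_formula_large
    (n : ℕ) (hn : 0 < n) (a : Fin n → ℝ) (ha : ∀ j, 0 < a j)
    (i : ℝ) (hi0 : (n : ℝ) < i) (hin : i < (n : ℝ) + 2) :
    dualVolume n i (ellipsoidSet a) =
      4 * Real.pi ^ ((n : ℝ) / 2) /
          (n * Real.Gamma (((n : ℝ) - i) / 2) * Real.Gamma (i / 2)) *
        ∫ u in Ioi (0 : ℝ),
          u ^ (i - 1) *
            ((∏ j, (1 + u ^ 2 / (a j) ^ 2)) ^ (-(1 : ℝ) / 2) - (∏ j, a j) / u ^ n) := by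
  have hi : 0 < i := lt_of_le_of_lt (Nat.cast_nonneg n) hi0
  have hG1 : Real.Gamma (i / 2) ≠ 0 := (Real.Gamma_pos_of_pos (by positivity)).ne'
  have hG2 : Real.Gamma (((n : ℝ) - i) / 2) ≠ 0 := by
    have h1 : ((n : ℝ) - i) / 2 ≠ 0 := by
      intro h; linarith
    have h2 := Real.Gamma_add_one h1
    have h3 : 0 < Real.Gamma (((n : ℝ) - i) / 2 + 1) := Real.Gamma_pos_of_pos (by linarith)
    intro h
    rw [h, mul_zero] at h2
    exact h3.ne' h2
  have hn' : (n : ℝ) ≠ 0 := by positivity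
  have hpi : π ^ ((n : ℝ) / 2) ≠ 0 := by positivity
  have hF := moment_fubini hn a ha i hi0 hin
  rw [(radial_part hn a ha i hi0 hin).2] at hF
  have hL : ∫ u in Ioi (0 : ℝ), ∫ x : EuclideanSpace ℝ (Fin n),
      u ^ (i - 1) * ((1 - rexp (-‖x‖ ^ 2)) * rexp (-qf a x * u ^ 2)) =
      -π ^ ((n : ℝ) / 2) * ∫ u in Ioi (0 : ℝ), u ^ (i - 1) *
            ((∏ j, (1 + u ^ 2 / (a j) ^ 2)) ^ (-(1 : ℝ) / 2) - (∏ j, a j) / u ^ n) := by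
    rw [← integral_const_mul]
    refine setIntegral_congr_fun measurableSet_Ioi fun u hu => ?_
    rw [integral_const_mul, gauss_diff a ha u hu]; ring
  rw [hL] at hF
  have hS : ∫ θ : Metric.sphere (0 : EuclideanSpace ℝ (Fin n)) 1,
      radial (ellipsoidSet a) (θ : EuclideanSpace ℝ (Fin n)) ^ i ∂(sphereMeasure n) =
      ∫ θ : Metric.sphere (0 : EuclideanSpace ℝ (Fin n)) 1,
        qf a (θ : EuclideanSpace ℝ (Fin n)) ^ (-i / 2) ∂(sphereMeasure n) :=
    integral_congr_ae (.of_forall fun θ =>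
      radial_rpow a ha _ (ne_zero_of_mem_unit_sphere θ) i)
  rw [dualVolume, hS]
  clear hL hS
  generalize (∫ θ : Metric.sphere (0 : EuclideanSpace ℝ (Fin n)) 1,
    qf a (θ : EuclideanSpace ℝ (Fin n)) ^ (-i / 2) ∂(sphereMeasure n)) = S at hF ⊢
  generalize (∫ u in Ioi (0 : ℝ), u ^ (i - 1) *
    ((∏ j, (1 + u ^ 2 / (a j) ^ 2)) ^ (-(1 : ℝ) / 2) - (∏ j, a j) / u ^ n)) = I at hF ⊢
  field_simp
  linear_combination 4 * hF
end

section
/- Let E₁ and E₂ be ellipsoids in ℝ³ centered at the origin. If Ṽ_{−1}(E₁) = Ṽ_{−1}(E₂), Ṽ₃(E₁) = Ṽ₃(E₂) (i.e., the volumes are equal), and Ṽ₄(E₁) = Ṽ₄(E₂), then E₁ and E₂ are congruent, i.e., the multisets of their semiaxes coincide. (For centered ellipsoids in ℝ³ this triple of dual volumes carries the same information as the triple of intrinsic volumes V₁, V₂, V₃, so this yields the Petrov–Tarasov theorem that ellipsoids in ℝ³ with equal intrinsic volumes V₁, V₂, V₃ are congruent.) -/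
open MeasureTheory Real Set

abbrev E3 := EuclideanSpace ℝ (Fin 3)

lemma polar3 (f : E3 → ENNReal) (hf : Measurable f) :
    ∫⁻ x, f x = ∫⁻ θ : Metric.sphere (0 : E3) 1, (∫⁻ r in Ioi (0:ℝ),
      ENNReal.ofReal (r ^ 2) * f (r • (θ : E3))) ∂(sphereMeasure 3) := by
  have hmp := (volume : Measure E3).measurePreserving_homeomorphUnitSphereProd
  have hd : Module.finrank ℝ E3 - 1 = 2 := by simp
  rw [hd] at hmp
  have h1 : ∫⁻ x, f x = ∫⁻ x : ({0}ᶜ : Set E3), f x ∂((volume : Measure E3).comap (↑)) := by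
    rw [lintegral_subtype_comap (measurableSet_singleton _).compl, restrict_compl_singleton]
  have h2 : ∫⁻ x : ({0}ᶜ : Set E3), f x ∂((volume : Measure E3).comap (↑))
      = ∫⁻ y, f ((homeomorphUnitSphereProd E3).symm y)
        ∂((volume : Measure E3).toSphere.prod (Measure.volumeIoiPow 2)) := by
    rw [← hmp.lintegral_comp_emb (Homeomorph.measurableEmbedding _)]
    simp
  rw [h1, h2, lintegral_prod]
  · unfold sphereMeasure
    refine lintegral_congr fun θ => ?_
    rw [Measure.volumeIoiPow, lintegral_withDensity_eq_lintegral_mul]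
    · have := lintegral_subtype_comap (μ := volume) (s := Ioi (0:ℝ)) measurableSet_Ioi
        (fun r => ENNReal.ofReal (r ^ 2) * f (r • (θ : E3)))
      rw [← this]
      refine lintegral_congr fun r => ?_
      simp
    · fun_prop
    · refine hf.comp (measurable_subtype_coe.comp ((Homeomorph.measurable _).comp ?_))
      fun_prop
  · exact (hf.comp (measurable_subtype_coe.comp (Homeomorph.measurable _))).aemeasurable

lemma scale_lint (g : ℝ → ENNReal) (c : ℝ) (hc : 0 < c) :
    ∫⁻ r in Ioi (0:ℝ), g (c * r) = ENNReal.ofReal c⁻¹ * ∫⁻ r in Ioi (0:ℝ), g r := by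
  have himg : (fun r => c * r) '' Ioi (0:ℝ) = Ioi 0 := by
    rw [Set.image_mul_left_Ioi hc, mul_zero]
  have := lintegral_image_eq_lintegral_abs_deriv_mul (s := Ioi (0:ℝ)) (f := fun r => c * r)
    (f' := fun _ => c) measurableSet_Ioi
    (fun x _ => by simpa using ((hasDerivAt_id x).const_mul c).hasDerivWithinAt)
    (fun x _ y _ h => mul_left_cancel₀ hc.ne' h) g
  rw [himg, lintegral_const_mul' _ _ ENNReal.ofReal_ne_top, abs_of_pos hc] at this
  rw [this, ← mul_assoc, ← ENNReal.ofReal_mul (by positivity), inv_mul_cancel₀ hc.ne']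
  simp

noncomputable def Qf (p : Fin 3 → ℝ) (x : E3) : ℝ := ∑ j, p j * x j ^ 2

lemma Qf_cont (p : Fin 3 → ℝ) : Continuous (Qf p) := by
  unfold Qf; fun_prop

lemma Qf_nonneg {p : Fin 3 → ℝ} (hp : ∀ j, 0 < p j) (x : E3) : 0 ≤ Qf p x :=
  Finset.sum_nonneg fun j _ => mul_nonneg (hp j).le (sq_nonneg _)

lemma Qf_pos {p : Fin 3 → ℝ} (hp : ∀ j, 0 < p j) (x : E3) (hx : x ≠ 0) : 0 < Qf p x := by
  rcases (Qf_nonneg hp x).lt_or_eq with h | h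
  · exact h
  · exfalso; apply hx
    have := (Finset.sum_eq_zero_iff_of_nonneg
      (fun j _ => mul_nonneg (hp j).le (sq_nonneg (x j)))).1 h.symm
    ext j
    have := this j (Finset.mem_univ _)
    simpa [(hp j).ne'] using this

lemma Qf_smul (p : Fin 3 → ℝ) (r : ℝ) (x : E3) : Qf p (r • x) = r ^ 2 * Qf p x := by
  simp [Qf, Finset.mul_sum]; congr 1; ext j; ring

lemma Qf_one (x : E3) : Qf 1 x = ‖x‖ ^ 2 := by
  simp [Qf, EuclideanSpace.norm_sq_eq]

lemma gauss_int (c : Fin 3 → ℝ) :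
    ∫ x : E3, exp (-Qf c x) = ∏ j, √(π / c j) := by
  have h := (PiLp.volume_preserving_toLp (Fin 3)).integral_comp
    (MeasurableEquiv.toLp 2 (Fin 3 → ℝ)).measurableEmbedding (fun x : E3 => exp (-Qf c x))
  rw [← h]
  have : ∀ x : Fin 3 → ℝ, exp (-Qf c (WithLp.toLp 2 x)) = ∏ j, exp (-c j * x j ^ 2) := by
    intro x
    rw [← Real.exp_sum]; simp [Qf]
  simp_rw [this]
  rw [integral_fintype_prod_volume_eq_prod (f := fun j (v : ℝ) => exp (-c j * v ^ 2))]
  simp_rw [integral_gaussian]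

lemma gauss_lint (c : Fin 3 → ℝ) (hc : ∀ j, 0 < c j) :
    Integrable (fun x : E3 => exp (-Qf c x)) := by
  by_contra h
  have h1 := gauss_int c
  rw [integral_undef h] at h1
  have : 0 < ∏ j, √(π / c j) := Finset.prod_pos fun j _ => Real.sqrt_pos.2 (div_pos pi_pos (hc j))
  linarith

lemma lint_pow_bound (f : ℝ → ℝ) (h1 : ∀ t, 0 < t → t ≤ 1 → f t ≤ t ^ (-1/2 : ℝ))
    (h2 : ∀ t, 1 < t → f t ≤ t ^ (-3/2 : ℝ)) :
    ∫⁻ t in Ioi (0:ℝ), ENNReal.ofReal (f t) < ⊤ := by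
  have hs : Ioi (0:ℝ) = Ioc 0 1 ∪ Ioi 1 := (Ioc_union_Ioi_eq_Ioi zero_le_one).symm
  rw [hs]
  refine (lintegral_union_le _ _ _).trans_lt (ENNReal.add_lt_top.2 ⟨?_, ?_⟩)
  · have hi : IntegrableOn (fun t : ℝ => t ^ (-1/2 : ℝ)) (Ioc 0 1) := by
      have := intervalIntegral.intervalIntegrable_rpow' (a := 0) (b := 1) (r := -1/2) (by norm_num)
      rwa [intervalIntegrable_iff_integrableOn_Ioc_of_le zero_le_one] at this
    refine (setLIntegral_mono' measurableSet_Ioc (fun t ht => ENNReal.ofReal_le_ofReal (h1 t ht.1 ht.2))).trans_lt ?_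
    exact hi.lintegral_lt_top
  · have hi := integrableOn_Ioi_rpow_of_lt (a := -3/2) (by norm_num) (zero_lt_one)
    refine (setLIntegral_mono' measurableSet_Ioi (fun t ht => ENNReal.ofReal_le_ofReal (h2 t ht))).trans_lt ?_
    exact hi.lintegral_lt_top

noncomputable def K1 : ENNReal :=
  ∫⁻ t in Ioi (0:ℝ), ENNReal.ofReal (t ^ (-3/2 : ℝ) * (1 - exp (-t)))

noncomputable def K2 : ENNReal :=
  ∫⁻ t in Ioi (0:ℝ), ENNReal.ofReal (t ^ (-1/2 : ℝ) * (1 - exp (-t⁻¹)))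

lemma K1_lt : K1 < ⊤ := by
  apply lint_pow_bound
  · intro t ht _
    have : t ^ (-1/2 : ℝ) = t ^ (-3/2 : ℝ) * t := by
      rw [← Real.rpow_add_one ht.ne']; norm_num
    rw [this]
    gcongr
    linarith [Real.one_sub_le_exp_neg t]
  · intro t ht
    have : 0 < t := by linarith
    refine mul_le_of_le_one_right (by positivity) ?_
    linarith [Real.exp_pos (-t)]

lemma K2_lt : K2 < ⊤ := by
  apply lint_pow_bound
  · intro t ht _
    refine mul_le_of_le_one_right (by positivity) ?_
    linarith [Real.exp_pos (-t⁻¹)]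
  · intro t ht
    have ht : 0 < t := by linarith
    have : t ^ (-3/2 : ℝ) = t ^ (-1/2 : ℝ) * t⁻¹ := by
      rw [← Real.rpow_neg_one, ← Real.rpow_add ht]; norm_num
    rw [this]
    gcongr
    linarith [Real.one_sub_le_exp_neg t⁻¹]

lemma K1_scale (q : ℝ) (hq : 0 < q) :
    ∫⁻ t in Ioi (0:ℝ), ENNReal.ofReal (t ^ (-3/2 : ℝ) * (1 - exp (-(t * q))))
      = ENNReal.ofReal (√q) * K1 := by
  have h := scale_lint (fun t => ENNReal.ofReal (t ^ (-3/2 : ℝ) * (1 - exp (-t)))) q hq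
  have h' : ∫⁻ t in Ioi (0:ℝ), ENNReal.ofReal (t ^ (-3/2 : ℝ) * (1 - exp (-(t * q))))
      = ENNReal.ofReal (q ^ (3/2 : ℝ)) * ∫⁻ t in Ioi (0:ℝ),
        ENNReal.ofReal ((q * t) ^ (-3/2 : ℝ) * (1 - exp (-(q * t)))) := by
    rw [← lintegral_const_mul' _ _ ENNReal.ofReal_ne_top]
    refine setLIntegral_congr_fun measurableSet_Ioi fun t ht => ?_
    have ht : 0 < t := ht
    rw [← ENNReal.ofReal_mul (by positivity), Real.mul_rpow hq.le ht.le, ← mul_assoc, ← mul_assoc,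
      ← Real.rpow_add hq, mul_comm q t]
    norm_num
  rw [h', h, ← mul_assoc, ← ENNReal.ofReal_mul (by positivity), ← Real.rpow_neg_one q,
    ← Real.rpow_add hq, Real.sqrt_eq_rpow]
  norm_num [K1]

lemma K2_scale (q : ℝ) (hq : 0 < q) :
    ∫⁻ t in Ioi (0:ℝ), ENNReal.ofReal (t ^ (-1/2 : ℝ) * (1 - exp (-(t⁻¹ * q))))
      = ENNReal.ofReal (√q) * K2 := by
  have h := scale_lint (fun t => ENNReal.ofReal (t ^ (-1/2 : ℝ) * (1 - exp (-t⁻¹)))) q⁻¹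
    (inv_pos.2 hq)
  have h' : ∫⁻ t in Ioi (0:ℝ), ENNReal.ofReal (t ^ (-1/2 : ℝ) * (1 - exp (-(t⁻¹ * q))))
      = ENNReal.ofReal (q ^ (-1/2 : ℝ)) * ∫⁻ t in Ioi (0:ℝ),
        ENNReal.ofReal ((q⁻¹ * t) ^ (-1/2 : ℝ) * (1 - exp (-(q⁻¹ * t)⁻¹))) := by
    rw [← lintegral_const_mul' _ _ ENNReal.ofReal_ne_top]
    refine setLIntegral_congr_fun measurableSet_Ioi fun t ht => ?_
    have ht : 0 < t := ht
    rw [← ENNReal.ofReal_mul (by positivity), Real.mul_rpow (by positivity) ht.le, ← mul_assoc,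
      ← mul_assoc, ← Real.mul_rpow hq.le (by positivity), mul_inv_cancel₀ hq.ne', mul_inv, inv_inv,
      mul_comm q]
    norm_num
  rw [h', h, ← mul_assoc, ← ENNReal.ofReal_mul (by positivity), inv_inv,
    ← Real.rpow_add_one hq.ne', Real.sqrt_eq_rpow]
  norm_num [K2]

lemma radial_ell (a : Fin 3 → ℝ) (ha : ∀ j, 0 < a j) (T : E3 ≃ₗᵢ[ℝ] E3) (x : E3) (hx : x ≠ 0) :
    radial (T '' ellipsoidSet a) x = (√(Qf (fun j => (a j ^ 2)⁻¹) (T.symm x)))⁻¹ := by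
  have hp : ∀ j, 0 < (a j ^ 2)⁻¹ := fun j => by have := ha j; positivity
  have hq : 0 < Qf (fun j => (a j ^ 2)⁻¹) (T.symm x) := Qf_pos hp _ (by simpa using hx)
  set q := Qf (fun j => (a j ^ 2)⁻¹) (T.symm x) with hqd
  have hs : {t : ℝ | 0 ≤ t ∧ t • x ∈ T '' ellipsoidSet a} = Icc 0 (√q)⁻¹ := by
    ext t
    simp only [mem_ofPred_eq, mem_Icc]
    refine and_congr_right fun ht => ?_
    have h1 : t • x ∈ T '' ellipsoidSet a ↔ t ^ 2 * q ≤ 1 := by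
      rw [hqd, ← Qf_smul]
      constructor
      · rintro ⟨y, hy, hyx⟩
        have : y = t • T.symm x := by
          rw [← map_smul, ← hyx]; simp
        rw [← this]
        simpa [ellipsoidSet, Qf, div_eq_inv_mul] using hy
      · intro h
        refine ⟨t • T.symm x, ?_, by simp⟩
        simpa [ellipsoidSet, Qf, div_eq_inv_mul] using h
    rw [h1, ← Real.sq_sqrt hq.le, ← mul_pow, sq_le_one_iff₀ (by positivity),
      Real.sqrt_sq (by positivity), ← one_div, le_div_iff₀ (by positivity)]
  rw [radial, hs, csSup_Icc (by positivity)]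

noncomputable def Sph (p : Fin 3 → ℝ) (T : E3 ≃ₗᵢ[ℝ] E3) (i : ℝ) : ENNReal :=
  ∫⁻ θ : Metric.sphere (0 : E3) 1, ENNReal.ofReal ((√(Qf p (T.symm θ)))⁻¹ ^ i) ∂(sphereMeasure 3)

lemma sph_ne (θ : Metric.sphere (0 : E3) 1) : (θ : E3) ≠ 0 := by
  intro h
  have := θ.2
  simp [h] at this

lemma Sph_eq (a : Fin 3 → ℝ) (ha : ∀ j, 0 < a j) (T : E3 ≃ₗᵢ[ℝ] E3) (i : ℝ) :
    Sph (fun j => (a j ^ 2)⁻¹) T i = ENNReal.ofReal (3 * dualVolume 3 i (T '' ellipsoidSet a)) := by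
  have hp : ∀ j, 0 < (a j ^ 2)⁻¹ := fun j => by have := ha j; positivity
  have hq : ∀ θ : Metric.sphere (0 : E3) 1, 0 < √(Qf (fun j => (a j ^ 2)⁻¹) (T.symm θ)) :=
    fun θ => Real.sqrt_pos.2 (Qf_pos hp _ (by simpa using sph_ne θ))
  unfold dualVolume
  simp_rw [fun θ : Metric.sphere (0 : E3) 1 => radial_ell a ha T θ (sph_ne θ)]
  have : IsFiniteMeasure (sphereMeasure 3) := by unfold sphereMeasure; infer_instance
  rw [← mul_assoc, show (3 * (1 / ((3 : ℕ) : ℝ))) = 1 by norm_num, one_mul,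
    ofReal_integral_eq_lintegral_ofReal]
  · rfl
  · have hc : Continuous fun θ : Metric.sphere (0 : E3) 1 =>
        (√(Qf (fun j => (a j ^ 2)⁻¹) (T.symm θ)))⁻¹ ^ i := by
      have h1 : Continuous fun θ : Metric.sphere (0 : E3) 1 =>
        (√(Qf (fun j => (a j ^ 2)⁻¹) (T.symm θ))) :=
          ((Qf_cont _).comp (T.symm.continuous.comp continuous_subtype_val)).sqrt
      exact (h1.inv₀ fun θ => (hq θ).ne').rpow_const fun θ => Or.inl (inv_pos.2 (hq θ)).ne'
    exact hc.integrable_of_hasCompactSupport (HasCompactSupport.of_compactSpace _)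
  · exact Filter.Eventually.of_forall fun θ => by have := hq θ; positivity

/-- rotation invariance -/
lemma rot_lint (T : E3 ≃ₗᵢ[ℝ] E3) (f : E3 → ENNReal) :
    ∫⁻ x, f (T.symm x) = ∫⁻ x, f x :=
  T.symm.measurePreserving.lintegral_comp_emb T.symm.toHomeomorph.measurableEmbedding f

noncomputable def C3 : ENNReal := ∫⁻ r in Ioi (0:ℝ), ENNReal.ofReal (r ^ 3 * exp (-r ^ 2))
noncomputable def C2 : ENNReal := ∫⁻ r in Ioi (0:ℝ), ENNReal.ofReal (r ^ 2 * exp (-r ^ 2))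

lemma C2_lt : C2 < ⊤ := by
  have h := (integrable_rpow_mul_exp_neg_mul_sq (b := 1) one_pos (s := 2) (by norm_num)).restrict
    (s := Ioi 0)
  have := h.lintegral_lt_top
  norm_num at this
  simpa [C2] using this

lemma C3_lt : C3 < ⊤ := by
  have h := (integrable_rpow_mul_exp_neg_mul_sq (b := 1) one_pos (s := 3) (by norm_num)).restrict
    (s := Ioi 0)
  have := h.lintegral_lt_top
  norm_num at this
  simpa [C3] using this

lemma item1 (p : Fin 3 → ℝ) (T : E3 ≃ₗᵢ[ℝ] E3) :
    ∫⁻ x, ENNReal.ofReal (√(Qf p x) * exp (-Qf 1 x)) = Sph p T (-1) * C3 := by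
  have h0 : ∀ x, Qf 1 x = Qf 1 (T.symm x) := fun x => by rw [Qf_one, Qf_one]; simp
  have hm : Measurable fun x : E3 => ENNReal.ofReal (√(Qf p (T.symm x)) * exp (-Qf 1 (T.symm x))) := by
    have h1 := (Qf_cont p).comp T.symm.continuous
    have h2 := (Qf_cont 1).comp T.symm.continuous
    exact ENNReal.measurable_ofReal.comp (h1.sqrt.mul h2.neg.rexp).measurable
  rw [← rot_lint T, polar3 _ hm, Sph, ← lintegral_mul_const']
  · refine lintegral_congr fun θ => ?_
    rw [C3, ← lintegral_const_mul' _ _ ENNReal.ofReal_ne_top]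
    refine setLIntegral_congr_fun measurableSet_Ioi fun r hr => ?_
    have hr : 0 < r := hr
    rw [← h0, Qf_one, norm_smul, map_smul, Qf_smul, ← ENNReal.ofReal_mul (by positivity),
      ← ENNReal.ofReal_mul (by positivity), Real.rpow_neg_one, inv_inv,
      Real.sqrt_mul (by positivity), Real.sqrt_sq hr.le]
    congr 1
    simp
    ring
  · exact C3_lt.ne

lemma item3 (p : Fin 3 → ℝ) (hp : ∀ j, 0 < p j) (T : E3 ≃ₗᵢ[ℝ] E3) :
    ∫⁻ x, ENNReal.ofReal (exp (-Qf p x)) = ∫⁻ θ : Metric.sphere (0 : E3) 1,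
      ENNReal.ofReal ((√(Qf p (T.symm θ)))⁻¹ ^ (3:ℝ)) * C2 ∂(sphereMeasure 3) := by
  have hm : Measurable fun x : E3 => ENNReal.ofReal (exp (-Qf p (T.symm x))) := by
    have h1 := (Qf_cont p).comp T.symm.continuous
    exact ENNReal.measurable_ofReal.comp (h1.neg.rexp).measurable
  rw [← rot_lint T, polar3 _ hm]
  refine lintegral_congr fun θ => ?_
  have hq : 0 < Qf p (T.symm θ) := Qf_pos hp _ (by simpa using sph_ne θ)
  have h := scale_lint (fun r => ENNReal.ofReal (r ^ 2 * exp (-r ^ 2))) _ (Real.sqrt_pos.2 hq)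
  have hs := Real.sqrt_pos.2 hq
  have hs2 := Real.sq_sqrt hq.le
  set s := √(Qf p (T.symm θ))
  rw [show s⁻¹ ^ (3:ℝ) = s⁻¹ ^ 2 * s⁻¹ by norm_cast, ENNReal.ofReal_mul (by positivity), mul_assoc, C2, ← h,
    ← lintegral_const_mul' _ _ ENNReal.ofReal_ne_top]
  refine setLIntegral_congr_fun measurableSet_Ioi fun r hr => ?_
  have hr : 0 < r := hr
  rw [map_smul, Qf_smul, ← ENNReal.ofReal_mul (by positivity),
      ← ENNReal.ofReal_mul (by positivity), ← hs2, ← mul_assoc, mul_pow, mul_comm (r ^ 2) (s ^ 2)]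
  congr 2
  field_simp

lemma item4 (p : Fin 3 → ℝ) (hp : ∀ j, 0 < p j) (T : E3 ≃ₗᵢ[ℝ] E3) :
    ∫⁻ x, ENNReal.ofReal (√(Qf 1 x) * exp (-Qf p x)) = Sph p T 4 * C3 := by
  have h0 : ∀ x, Qf 1 x = Qf 1 (T.symm x) := fun x => by rw [Qf_one, Qf_one]; simp
  have hm : Measurable fun x : E3 => ENNReal.ofReal (√(Qf 1 (T.symm x)) * exp (-Qf p (T.symm x))) := by
    have h1 := (Qf_cont p).comp T.symm.continuous
    have h2 := (Qf_cont 1).comp T.symm.continuous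
    exact ENNReal.measurable_ofReal.comp (h2.sqrt.mul h1.neg.rexp).measurable
  rw [← rot_lint T, polar3 _ hm, Sph, ← lintegral_mul_const' _ _ C3_lt.ne]
  refine lintegral_congr fun θ => ?_
  have hq : 0 < Qf p (T.symm θ) := Qf_pos hp _ (by simpa using sph_ne θ)
  have h := scale_lint (fun r => ENNReal.ofReal (r ^ 3 * exp (-r ^ 2))) _ (Real.sqrt_pos.2 hq)
  have hs := Real.sqrt_pos.2 hq
  have hs2 := Real.sq_sqrt hq.le
  set s := √(Qf p (T.symm θ))
  rw [show s⁻¹ ^ (4:ℝ) = s⁻¹ ^ 3 * s⁻¹ by norm_cast, ENNReal.ofReal_mul (by positivity), mul_assoc, C3, ← h,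
    ← lintegral_const_mul' _ _ ENNReal.ofReal_ne_top]
  refine setLIntegral_congr_fun measurableSet_Ioi fun r hr => ?_
  have hr : 0 < r := hr
  rw [← h0, Qf_one, norm_smul, map_smul, Qf_smul, ← ENNReal.ofReal_mul (by positivity),
      ← ENNReal.ofReal_mul (by positivity), ← hs2, ← mul_assoc, ← mul_assoc, show r ^ 2 * s ^ 2 = (s * r) ^ 2 by ring]
  have hn : ‖r‖ * ‖(θ : E3)‖ = r := by simp [abs_of_pos hr]
  rw [hn, Real.sqrt_sq hr.le]
  congr 2
  field_simp

/-- product gaussians -/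
noncomputable def Gp (c : Fin 3 → ℝ) : ℝ := ∏ j, √(π / c j)

lemma gauss_diff_s8 (c d : Fin 3 → ℝ) (hc : ∀ j, 0 < c j) (hd : ∀ j, 0 < d j) (hcd : ∀ j, c j ≤ d j) :
    ∫⁻ x, ENNReal.ofReal (exp (-Qf c x) - exp (-Qf d x)) = ENNReal.ofReal (Gp c - Gp d) := by
  have hi : Integrable (fun x : E3 => exp (-Qf c x) - exp (-Qf d x)) :=
    (gauss_lint c hc).sub (gauss_lint d hd)
  rw [← ofReal_integral_eq_lintegral_ofReal hi,
    integral_sub (gauss_lint c hc) (gauss_lint d hd), gauss_int, gauss_int]; rfl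
  refine Filter.Eventually.of_forall fun x => ?_
  have : Qf c x ≤ Qf d x := Finset.sum_le_sum fun j _ =>
    mul_le_mul_of_nonneg_right (hcd j) (sq_nonneg _)
  have := Real.exp_le_exp.2 (neg_le_neg this)
  simpa using this

lemma Qf_comb (c d : Fin 3 → ℝ) (t : ℝ) (x : E3) :
    Qf (fun j => c j + t * d j) x = Qf c x + t * Qf d x := by
  simp only [Qf, Finset.mul_sum, ← Finset.sum_add_distrib]
  refine Finset.sum_congr rfl fun j _ => by ring

lemma item1' (p : Fin 3 → ℝ) (hp : ∀ j, 0 < p j) :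
    (∫⁻ x, ENNReal.ofReal (√(Qf p x) * exp (-Qf 1 x))) * K1 =
      ∫⁻ t in Ioi (0:ℝ), ENNReal.ofReal (t ^ (-3/2 : ℝ) * (Gp 1 - Gp (fun j => 1 + t * p j))) := by
  rw [← lintegral_mul_const' _ _ K1_lt.ne]
  have h1 : ∀ᵐ x : E3, ENNReal.ofReal (√(Qf p x) * exp (-Qf 1 x)) * K1 =
      ∫⁻ t in Ioi (0:ℝ), ENNReal.ofReal (t ^ (-3/2 : ℝ) * (exp (-Qf 1 x) -
        exp (-Qf (fun j => 1 + t * p j) x))) := by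
    have h0 : ∀ᵐ x : E3, x ≠ 0 := by
      rw [ae_iff]; simp
    filter_upwards [h0] with x hx
    rw [mul_comm (√_), ENNReal.ofReal_mul (by positivity), mul_assoc, ← K1_scale _ (Qf_pos hp x hx),
      ← lintegral_const_mul' _ _ ENNReal.ofReal_ne_top]
    refine setLIntegral_congr_fun measurableSet_Ioi fun t ht => ?_
    have ht : 0 < t := ht
    rw [← ENNReal.ofReal_mul (by positivity)]
    have := Qf_comb 1 p t x
    simp only [Pi.one_apply] at this
    rw [this, neg_add, Real.exp_add]
    congr 1; ring
  rw [lintegral_congr_ae h1, lintegral_lintegral_swap]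
  · refine setLIntegral_congr_fun measurableSet_Ioi fun t ht => ?_
    have ht : 0 < t := ht
    simp_rw [fun x : E3 => ENNReal.ofReal_mul (p := t ^ (-3/2 : ℝ)) (q := (exp (-Qf 1 x) -
        exp (-Qf (fun j => 1 + t * p j) x))) (by positivity)]
    rw [lintegral_const_mul' _ _ ENNReal.ofReal_ne_top, gauss_diff_s8, ← ENNReal.ofReal_mul (by positivity)]
    · intro j; simp
    · intro j; have := hp j; positivity
    · intro j; have := hp j; simp; positivity
  · have : Measurable fun z : E3 × ℝ => ENNReal.ofReal (z.2 ^ (-3/2 : ℝ) * (exp (-Qf 1 z.1) -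
        exp (-Qf (fun j => 1 + z.2 * p j) z.1))) := by
      unfold Qf; fun_prop
    exact this.aemeasurable

lemma item4' (p : Fin 3 → ℝ) (hp : ∀ j, 0 < p j) :
    (∫⁻ x, ENNReal.ofReal (√(Qf 1 x) * exp (-Qf p x))) * K2 =
      ∫⁻ t in Ioi (0:ℝ), ENNReal.ofReal (t ^ (-1/2 : ℝ) * (Gp p - Gp (fun j => p j + t⁻¹ * 1))) := by
  rw [← lintegral_mul_const' _ _ K2_lt.ne]
  have h1 : ∀ᵐ x : E3, ENNReal.ofReal (√(Qf 1 x) * exp (-Qf p x)) * K2 =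
      ∫⁻ t in Ioi (0:ℝ), ENNReal.ofReal (t ^ (-1/2 : ℝ) * (exp (-Qf p x) -
        exp (-Qf (fun j => p j + t⁻¹ * 1) x))) := by
    have h0 : ∀ᵐ x : E3, x ≠ 0 := by
      rw [ae_iff]; simp
    filter_upwards [h0] with x hx
    rw [mul_comm (√_), ENNReal.ofReal_mul (by positivity), mul_assoc,
      ← K2_scale _ (Qf_pos (p := 1) (by simp) x hx),
      ← lintegral_const_mul' _ _ ENNReal.ofReal_ne_top]
    refine setLIntegral_congr_fun measurableSet_Ioi fun t ht => ?_
    have ht : 0 < t := ht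
    rw [← ENNReal.ofReal_mul (by positivity)]
    have := Qf_comb p 1 t⁻¹ x
    simp only [Pi.one_apply] at this
    rw [this, neg_add, Real.exp_add]
    congr 1; ring
  rw [lintegral_congr_ae h1, lintegral_lintegral_swap]
  · refine setLIntegral_congr_fun measurableSet_Ioi fun t ht => ?_
    have ht : 0 < t := ht
    simp_rw [fun x : E3 => ENNReal.ofReal_mul (p := t ^ (-1/2 : ℝ)) (q := (exp (-Qf p x) -
        exp (-Qf (fun j => p j + t⁻¹ * 1) x))) (by positivity)]
    rw [lintegral_const_mul' _ _ ENNReal.ofReal_ne_top, gauss_diff_s8, ← ENNReal.ofReal_mul (by positivity)]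
    · exact hp
    · intro j; have := hp j; positivity
    · intro j; have := hp j; simp; positivity
  · have : Measurable fun z : E3 × ℝ => ENNReal.ofReal (z.2 ^ (-1/2 : ℝ) * (exp (-Qf p z.1) -
        exp (-Qf (fun j => p j + z.2⁻¹ * 1) z.1))) := by
      unfold Qf; fun_prop
    exact this.aemeasurable

lemma Gp_eq (c : Fin 3 → ℝ) (hc : ∀ j, 0 < c j) : Gp c = √(π ^ 3 / ∏ j, c j) := by
  have h0 := hc 0
  have h1 := hc 1
  have h2 := hc 2
  rw [Gp, Fin.prod_univ_three, Fin.prod_univ_three, ← Real.sqrt_mul (by positivity),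
    ← Real.sqrt_mul (by positivity)]
  congr 1; field_simp

lemma Gp_lt (c d : Fin 3 → ℝ) (hc : ∀ j, 0 < c j) (hd : ∀ j, 0 < d j) :
    Gp c < Gp d ↔ ∏ j, d j < ∏ j, c j := by
  have h1 : 0 < ∏ j, c j := Finset.prod_pos fun j _ => hc j
  have h2 : 0 < ∏ j, d j := Finset.prod_pos fun j _ => hd j
  rw [Gp_eq c hc, Gp_eq d hd, Real.sqrt_lt_sqrt_iff (by positivity),
    div_lt_div_iff_of_pos_left (by positivity) h1 h2]

noncomputable def gg (p : Fin 3 → ℝ) (t : ℝ) : ℝ := Gp (fun j => 1 + t * p j)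

lemma gg_lt (p q : Fin 3 → ℝ) (hp : ∀ j, 0 < p j) (hq : ∀ j, 0 < q j) (t : ℝ) (ht : 0 < t) :
    gg p t < gg q t ↔ ∏ j, (1 + t * q j) < ∏ j, (1 + t * p j) :=
  Gp_lt _ _ (fun j => by have := hp j; positivity) (fun j => by have := hq j; positivity)

lemma gg_inv (p : Fin 3 → ℝ) (hp : ∀ j, 0 < p j) (t : ℝ) (ht : 0 < t) :
    t ^ (-1/2 : ℝ) * Gp (fun j => p j + t⁻¹ * 1) = t * gg p t := by
  have h : ∀ j, √(π / (p j + t⁻¹ * 1)) = √t * √(π / (1 + t * p j)) := by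
    intro j
    have := hp j
    rw [← Real.sqrt_mul ht.le]; congr 1; field_simp; ring
  have h2 : t ^ (-1/2 : ℝ) * √t = 1 := by
    rw [Real.sqrt_eq_rpow, ← Real.rpow_add ht]; norm_num
  have h3 := Real.mul_self_sqrt ht.le
  simp only [gg, Gp, Fin.prod_univ_three, h]
  generalize √(π / (1 + t * p 0)) = A
  generalize √(π / (1 + t * p 1)) = B
  generalize √(π / (1 + t * p 2)) = C
  calc _ = (t ^ (-1/2 : ℝ) * √t) * (√t * √t) * (A * B * C) := by ring
    _ = _ := by rw [h2, h3]; ring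

lemma diff_zero (f₁ f₂ : ℝ → ℝ) (hm₁ : Measurable f₁) (hm₂ : Measurable f₂)
    (hn₁ : ∀ t, 0 < t → 0 ≤ f₁ t) (hn₂ : ∀ t, 0 < t → 0 ≤ f₂ t)
    (he : ∫⁻ t in Ioi (0:ℝ), ENNReal.ofReal (f₁ t) = ∫⁻ t in Ioi (0:ℝ), ENNReal.ofReal (f₂ t))
    (hf : ∫⁻ t in Ioi (0:ℝ), ENNReal.ofReal (f₁ t) < ⊤) :
    IntegrableOn (fun t => f₁ t - f₂ t) (Ioi 0) ∧ ∫ t in Ioi (0:ℝ), (f₁ t - f₂ t) = 0 := by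
  have a1 : 0 ≤ᵐ[volume.restrict (Ioi 0)] f₁ := by
    filter_upwards [ae_restrict_mem measurableSet_Ioi] with t ht using hn₁ t ht
  have a2 : 0 ≤ᵐ[volume.restrict (Ioi 0)] f₂ := by
    filter_upwards [ae_restrict_mem measurableSet_Ioi] with t ht using hn₂ t ht
  have i1 : IntegrableOn f₁ (Ioi 0) :=
    (lintegral_ofReal_ne_top_iff_integrable hm₁.aestronglyMeasurable a1).1 hf.ne
  have i2 : IntegrableOn f₂ (Ioi 0) :=
    (lintegral_ofReal_ne_top_iff_integrable hm₂.aestronglyMeasurable a2).1 (he ▸ hf.ne)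
  refine ⟨i1.sub i2, ?_⟩
  rw [integral_sub i1 i2, integral_eq_lintegral_of_nonneg_ae a1 hm₁.aestronglyMeasurable,
    integral_eq_lintegral_of_nonneg_ae a2 hm₂.aestronglyMeasurable, he, sub_self]

lemma core (p q : Fin 3 → ℝ) (hp : ∀ j, 0 < p j) (hq : ∀ j, 0 < q j) (α β : ℝ)
    (hP : ∀ t, ∏ j, (1 + t * p j) - ∏ j, (1 + t * q j) = t * (α + β * t))
    (w : ℝ → ℝ) (t₀ : ℝ) (hw0 : ∀ t, 0 < t → w t = 0 → t = t₀)
    (hw : ∀ t, 0 < t → 0 ≤ w t * (α + β * t))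
    (hi : IntegrableOn (fun t => w t * (gg q t - gg p t)) (Ioi 0))
    (hz : ∫ t in Ioi (0:ℝ), w t * (gg q t - gg p t) = 0) : α = 0 ∧ β = 0 := by
  have hlt : ∀ t, 0 < t → (gg p t < gg q t ↔ 0 < α + β * t) := by
    intro t ht
    rw [gg_lt p q hp hq t ht, ← sub_pos, hP, mul_pos_iff_of_pos_left ht]
  have hgt : ∀ t, 0 < t → (gg q t < gg p t ↔ α + β * t < 0) := by
    intro t ht
    rw [gg_lt q p hq hp t ht, ← sub_neg, hP]
    exact smul_neg_iff_of_pos_left ht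
  have hnn : ∀ t, 0 < t → 0 ≤ w t * (gg q t - gg p t) := by
    intro t ht
    have h := hw t ht
    rcases lt_trichotomy (α + β * t) 0 with h1 | h1 | h1
    · have := (hgt t ht).2 h1
      have : w t ≤ 0 := by nlinarith
      nlinarith
    · have a1 := mt (hgt t ht).1 (by linarith)
      have a2 := mt (hlt t ht).1 (by linarith)
      have : gg q t - gg p t = 0 := by linarith
      rw [this, mul_zero]
    · have := (hlt t ht).2 h1
      have : 0 ≤ w t := by nlinarith
      nlinarith
  by_contra hne
  have hae := (setIntegral_eq_zero_iff_of_nonneg_ae (by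
    filter_upwards [ae_restrict_mem measurableSet_Ioi] with t ht using hnn t ht) hi).1 hz
  have hfin : ∀ᵐ t ∂(volume.restrict (Ioi (0:ℝ))), t ∉ ({t₀, -α / β} : Set ℝ) := by
    apply ae_restrict_of_ae
    rw [ae_iff]
    refine measure_mono_null (fun x hx => ?_)
      ((Set.toFinite ({t₀, -α / β} : Set ℝ)).measure_zero volume)
    exact not_not.1 hx
  have hF : ∀ᵐ t ∂(volume.restrict (Ioi (0:ℝ))), False := by
    filter_upwards [hae, hfin, ae_restrict_mem measurableSet_Ioi] with t h1 h2 h3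
    have h3 : 0 < t := h3
    simp only [mem_insert_iff, mem_singleton_iff, not_or] at h2
    rcases mul_eq_zero.1 h1 with h | h
    · exact h2.1 (hw0 t h3 h)
    · have a1 := mt (hgt t h3).2 (by linarith)
      have a2 := mt (hlt t h3).2 (by linarith)
      have h4 : α + β * t = 0 := by linarith
      have hb : β ≠ 0 := by
        rintro rfl
        exact hne ⟨by linarith, rfl⟩
      apply h2.2
      field_simp
      linarith
  have h0 : (volume.restrict (Ioi (0:ℝ))) univ = 0 := by
    have := hF
    rw [ae_iff] at this
    exact measure_mono_null (fun x _ => not_false) this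
  rw [Measure.restrict_apply_univ, Real.volume_Ioi] at h0
  exact ENNReal.top_ne_zero h0

lemma gg_meas (p : Fin 3 → ℝ) : Measurable (gg p) := by
  unfold gg Gp; fun_prop

lemma one_sided (p q : Fin 3 → ℝ) (hp : ∀ j, 0 < p j) (hq : ∀ j, 0 < q j) (α β : ℝ)
    (hP : ∀ t, ∏ j, (1 + t * p j) - ∏ j, (1 + t * q j) = t * (α + β * t))
    (hA : IntegrableOn (fun t => t ^ (-3/2 : ℝ) * (gg q t - gg p t)) (Ioi 0) ∧
      ∫ t in Ioi (0:ℝ), t ^ (-3/2 : ℝ) * (gg q t - gg p t) = 0)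
    (hB : IntegrableOn (fun t => t * (gg q t - gg p t)) (Ioi 0) ∧
      ∫ t in Ioi (0:ℝ), t * (gg q t - gg p t) = 0)
    (hs : 0 < β ∨ (β = 0 ∧ 0 ≤ α)) : α = 0 ∧ β = 0 := by
  by_cases hα : 0 ≤ α
  · have hβ : 0 ≤ β := by rcases hs with h | h <;> linarith
    refine core p q hp hq α β hP _ 0 ?_ ?_ hA.1 hA.2
    · intro t ht h
      have : 0 < t ^ (-3/2 : ℝ) := by positivity
      linarith
    · intro t ht
      positivity
  · push Not at hα
    have hβ : 0 < β := by rcases hs with h | h <;> linarith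
    set t₀ := -α / β with ht₀
    have ht₀p : 0 < t₀ := div_pos (by linarith) hβ
    have hαe : α = -β * t₀ := by rw [ht₀]; field_simp
    have hfac : ∀ t : ℝ, 0 < t → t - t₀ ^ (5/2 : ℝ) * t ^ (-3/2 : ℝ) =
        t ^ (-3/2 : ℝ) * (t ^ (5/2 : ℝ) - t₀ ^ (5/2 : ℝ)) := by
      intro t ht
      rw [mul_sub, ← Real.rpow_add ht]; norm_num; ring
    have hfun : (fun t => (t - t₀ ^ (5/2 : ℝ) * t ^ (-3/2 : ℝ)) * (gg q t - gg p t)) =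
        fun t => t * (gg q t - gg p t) - t₀ ^ (5/2 : ℝ) * (t ^ (-3/2 : ℝ) * (gg q t - gg p t)) := by
      ext t; ring
    refine core p q hp hq α β hP (fun t => t - t₀ ^ (5/2 : ℝ) * t ^ (-3/2 : ℝ)) t₀ ?_ ?_ ?_ ?_
    · intro t ht h
      simp only [hfac t ht] at h
      have h1 : 0 < t ^ (-3/2 : ℝ) := by positivity
      have h2 : t ^ (5/2 : ℝ) = t₀ ^ (5/2 : ℝ) := by
        rcases mul_eq_zero.1 h with h | h <;> linarith
      exact (Real.rpow_left_inj ht.le ht₀p.le (by norm_num)).1 h2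
    · intro t ht
      simp only [hfac t ht]
      have h1 : 0 < t ^ (-3/2 : ℝ) := by positivity
      rw [mul_assoc]
      refine mul_nonneg h1.le ?_
      rw [hαe, show -β * t₀ + β * t = β * (t - t₀) by ring]
      rcases le_total t t₀ with h | h
      · have := Real.rpow_le_rpow ht.le h (show (0:ℝ) ≤ 5/2 by norm_num)
        exact mul_nonneg_of_nonpos_of_nonpos (by linarith) (mul_nonpos_of_nonneg_of_nonpos hβ.le (by linarith))
      · have := Real.rpow_le_rpow ht₀p.le h (show (0:ℝ) ≤ 5/2 by norm_num)
        exact mul_nonneg (by linarith) (mul_nonneg hβ.le (by linarith))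
    · rw [hfun]; exact hB.1.sub (hA.1.const_mul _)
    · simp only [hfun]
      rw [integral_sub hB.1 (hA.1.const_mul _), integral_const_mul, hA.2, hB.2]; simp

lemma neg_pair (w f g : ℝ → ℝ) (h : IntegrableOn (fun t => w t * (f t - g t)) (Ioi 0) ∧
      ∫ t in Ioi (0:ℝ), w t * (f t - g t) = 0) :
    IntegrableOn (fun t => w t * (g t - f t)) (Ioi 0) ∧
      ∫ t in Ioi (0:ℝ), w t * (g t - f t) = 0 := by
  have : (fun t => w t * (g t - f t)) = fun t => -(w t * (f t - g t)) := by ext t; ring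
  simp only [this, integral_neg, h.2, neg_zero, and_true]
  exact h.1.neg

lemma pair_eq (s t u v : ℝ) (h1 : s + t = u + v) (h2 : s * t = u * v) :
    (s = u ∧ t = v) ∨ (s = v ∧ t = u) := by
  have : (s - u) * (s - v) = 0 := by
    have ht : t = u + v - s := by linarith
    subst ht
    linear_combination -h2
  rcases mul_eq_zero.1 this with h | h
  · left; constructor <;> linarith
  · right; constructor <;> linarith

lemma perm_of_sym (p q : Fin 3 → ℝ) (e1 : p 0 + p 1 + p 2 = q 0 + q 1 + q 2)
    (e2 : p 0 * p 1 + p 0 * p 2 + p 1 * p 2 = q 0 * q 1 + q 0 * q 2 + q 1 * q 2)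
    (e3 : p 0 * p 1 * p 2 = q 0 * q 1 * q 2) :
    ∃ σ : Equiv.Perm (Fin 3), ∀ j, q j = p (σ j) := by
  have hc : (q 0 - p 0) * ((q 0 - p 1) * (q 0 - p 2)) = 0 := by
    linear_combination (-(q 0) ^ 2) * e1 + q 0 * e2 - e3
  have fin : ∀ σ : Equiv.Perm (Fin 3), q 0 = p (σ 0) → q 1 = p (σ 1) → q 2 = p (σ 2) →
      ∃ σ : Equiv.Perm (Fin 3), ∀ j, q j = p (σ j) := fun σ h0 h1 h2 =>
    ⟨σ, fun j => by fin_cases j <;> assumption⟩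
  rcases mul_eq_zero.1 hc with h | h
  · have h : q 0 = p 0 := by linarith
    rcases pair_eq (q 1) (q 2) (p 1) (p 2) (by linarith)
      (by linear_combination -e2 + p 0 * e1 - (q 1 + q 2 - p 0) * h) with ⟨h1, h2⟩ | ⟨h1, h2⟩
    · exact fin 1 h h1 h2
    · exact fin (Equiv.swap 1 2) h h1 h2
  rcases mul_eq_zero.1 h with h | h
  · have h : q 0 = p 1 := by linarith
    rcases pair_eq (q 1) (q 2) (p 0) (p 2) (by linarith)
      (by linear_combination -e2 + p 1 * e1 - (q 1 + q 2 - p 1) * h) with ⟨h1, h2⟩ | ⟨h1, h2⟩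
    · exact fin (Equiv.swap 0 1) h h1 h2
    · exact fin (finRotate 3) h h1 h2
  · have h : q 0 = p 2 := by linarith
    rcases pair_eq (q 1) (q 2) (p 0) (p 1) (by linarith)
      (by linear_combination -e2 + p 2 * e1 - (q 1 + q 2 - p 2) * h) with ⟨h1, h2⟩ | ⟨h1, h2⟩
    · exact fin (finRotate 3).symm h h1 h2
    · exact fin (Equiv.swap 0 2) h h1 h2

lemma Gp_anti (c d : Fin 3 → ℝ) (hc : ∀ j, 0 < c j) (hcd : ∀ j, c j ≤ d j) : Gp d ≤ Gp c := by
  refine Finset.prod_le_prod (fun j _ => Real.sqrt_nonneg _) fun j _ => Real.sqrt_le_sqrt ?_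
  exact div_le_div_of_nonneg_left pi_pos.le (hc j) (hcd j)

lemma main_perm (p q : Fin 3 → ℝ) (hp : ∀ j, 0 < p j) (hq : ∀ j, 0 < q j)
    (hG : Gp p = Gp q)
    (hA : ∫⁻ t in Ioi (0:ℝ), ENNReal.ofReal (t ^ (-3/2 : ℝ) * (Gp 1 - Gp (fun j => 1 + t * p j))) =
      ∫⁻ t in Ioi (0:ℝ), ENNReal.ofReal (t ^ (-3/2 : ℝ) * (Gp 1 - Gp (fun j => 1 + t * q j))))
    (hAf : ∫⁻ t in Ioi (0:ℝ), ENNReal.ofReal (t ^ (-3/2 : ℝ) *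
      (Gp 1 - Gp (fun j => 1 + t * p j))) < ⊤)
    (hB : ∫⁻ t in Ioi (0:ℝ), ENNReal.ofReal (t ^ (-1/2 : ℝ) *
        (Gp p - Gp (fun j => p j + t⁻¹ * 1))) =
      ∫⁻ t in Ioi (0:ℝ), ENNReal.ofReal (t ^ (-1/2 : ℝ) * (Gp q - Gp (fun j => q j + t⁻¹ * 1))))
    (hBf : ∫⁻ t in Ioi (0:ℝ), ENNReal.ofReal (t ^ (-1/2 : ℝ) *
      (Gp p - Gp (fun j => p j + t⁻¹ * 1))) < ⊤) :
    ∃ σ : Equiv.Perm (Fin 3), ∀ j, q j = p (σ j) := by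
  have nA : ∀ p : Fin 3 → ℝ, (∀ j, 0 < p j) → ∀ t : ℝ, 0 < t →
      0 ≤ t ^ (-3/2 : ℝ) * (Gp 1 - Gp (fun j => 1 + t * p j)) := by
    intro p hp t ht
    refine mul_nonneg (by positivity) (sub_nonneg.2 (Gp_anti _ _ (by simp) fun j => ?_))
    have := hp j
    simp; positivity
  have nB : ∀ p : Fin 3 → ℝ, (∀ j, 0 < p j) → ∀ t : ℝ, 0 < t →
      0 ≤ t ^ (-1/2 : ℝ) * (Gp p - Gp (fun j => p j + t⁻¹ * 1)) := by
    intro p hp t ht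
    refine mul_nonneg (by positivity) (sub_nonneg.2 (Gp_anti _ _ hp fun j => ?_))
    simp; positivity
  have mA : ∀ p : Fin 3 → ℝ, Measurable fun t : ℝ =>
      t ^ (-3/2 : ℝ) * (Gp 1 - Gp (fun j => 1 + t * p j)) := by
    intro p; unfold Gp; fun_prop
  have mB : ∀ p : Fin 3 → ℝ, Measurable fun t : ℝ =>
      t ^ (-1/2 : ℝ) * (Gp p - Gp (fun j => p j + t⁻¹ * 1)) := by
    intro p; unfold Gp; fun_prop
  have dA := diff_zero _ _ (mA p) (mA q) (nA p hp) (nA q hq) hA hAf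
  have dB := diff_zero _ _ (mB p) (mB q) (nB p hp) (nB q hq) hB hBf
  have fA : ∀ t : ℝ, t ^ (-3/2 : ℝ) * (Gp 1 - Gp (fun j => 1 + t * p j)) -
      t ^ (-3/2 : ℝ) * (Gp 1 - Gp (fun j => 1 + t * q j)) = t ^ (-3/2 : ℝ) * (gg q t - gg p t) := by
    intro t; unfold gg; ring
  have fB : ∀ t ∈ Ioi (0:ℝ), t ^ (-1/2 : ℝ) * (Gp p - Gp (fun j => p j + t⁻¹ * 1)) -
      t ^ (-1/2 : ℝ) * (Gp q - Gp (fun j => q j + t⁻¹ * 1)) = t * (gg q t - gg p t) := by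
    intro t ht
    rw [mul_sub, mul_sub, gg_inv p hp t ht, gg_inv q hq t ht, hG]; ring
  simp only [fA] at dA
  rw [setIntegral_congr_fun measurableSet_Ioi fB, integrableOn_congr_fun fB measurableSet_Ioi] at dB
  have e3 : ∏ j, p j = ∏ j, q j := by
    have h1 := mt (Gp_lt p q hp hq).2 (by linarith)
    have h2 := mt (Gp_lt q p hq hp).2 (by linarith)
    linarith
  rw [Fin.prod_univ_three, Fin.prod_univ_three] at e3
  have key : p 0 + p 1 + p 2 - (q 0 + q 1 + q 2) = 0 ∧
      p 0 * p 1 + p 0 * p 2 + p 1 * p 2 - (q 0 * q 1 + q 0 * q 2 + q 1 * q 2) = 0 := by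
    have hP : ∀ t, ∏ j, (1 + t * p j) - ∏ j, (1 + t * q j) =
        t * ((p 0 + p 1 + p 2 - (q 0 + q 1 + q 2)) +
        (p 0 * p 1 + p 0 * p 2 + p 1 * p 2 - (q 0 * q 1 + q 0 * q 2 + q 1 * q 2)) * t) := by
      intro t
      simp only [Fin.prod_univ_three]
      linear_combination t ^ 3 * e3
    generalize p 0 + p 1 + p 2 - (q 0 + q 1 + q 2) = α at *
    generalize p 0 * p 1 + p 0 * p 2 + p 1 * p 2 - (q 0 * q 1 + q 0 * q 2 + q 1 * q 2) = β at *
    by_cases hs : 0 < β ∨ (β = 0 ∧ 0 ≤ α)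
    · exact one_sided p q hp hq α β hP dA dB hs
    · have := one_sided q p hq hp (-α) (-β) (fun t => by linear_combination -hP t)
        (neg_pair (fun t => t ^ (-3/2 : ℝ)) _ _ dA) (neg_pair (fun t => t) _ _ dB) (by
          push Not at hs
          rcases hs.1.lt_or_eq with h | h
          · left; linarith
          · right; exact ⟨by linarith, by linarith [hs.2 h]⟩)
      exact ⟨by linarith [this.1], by linarith [this.2]⟩
  exact perm_of_sym p q (by linarith [key.1]) (by linarith [key.2]) e3

lemma dv_data (a b : Fin 3 → ℝ) (ha : ∀ j, 0 < a j) (hb : ∀ j, 0 < b j) (T₁ T₂ : E3 ≃ₗᵢ[ℝ] E3)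
    (hm1 : dualVolume 3 (-1) (T₁ '' ellipsoidSet a) = dualVolume 3 (-1) (T₂ '' ellipsoidSet b))
    (h3 : dualVolume 3 3 (T₁ '' ellipsoidSet a) = dualVolume 3 3 (T₂ '' ellipsoidSet b))
    (h4 : dualVolume 3 4 (T₁ '' ellipsoidSet a) = dualVolume 3 4 (T₂ '' ellipsoidSet b)) :
    ∃ σ : Equiv.Perm (Fin 3), ∀ j, b j = a (σ j) := by
  have hS : ∀ i, dualVolume 3 i (T₁ '' ellipsoidSet a) = dualVolume 3 i (T₂ '' ellipsoidSet b) →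
      Sph (fun j => (a j ^ 2)⁻¹) T₁ i = Sph (fun j => (b j ^ 2)⁻¹) T₂ i ∧
      Sph (fun j => (a j ^ 2)⁻¹) T₁ i < ⊤ := by
    intro i h
    rw [Sph_eq a ha, Sph_eq b hb, h]
    exact ⟨rfl, ENNReal.ofReal_lt_top⟩
  have s1 := hS _ hm1
  have s3 := hS _ h3
  have s4 := hS _ h4
  have hp : ∀ j, 0 < (a j ^ 2)⁻¹ := fun j => by have := ha j; positivity
  have hq : ∀ j, 0 < (b j ^ 2)⁻¹ := fun j => by have := hb j; positivity
  have key : ∃ σ : Equiv.Perm (Fin 3), ∀ j, (b j ^ 2)⁻¹ = (a (σ j) ^ 2)⁻¹ := by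
    have G : ∀ (p : Fin 3 → ℝ) (_ : ∀ j, 0 < p j) (T : E3 ≃ₗᵢ[ℝ] E3),
        ENNReal.ofReal (Gp p) = Sph p T 3 * C2 := by
      intro p hp T
      rw [Sph, ← lintegral_mul_const' _ _ C2_lt.ne, ← item3 p hp T,
        ← ofReal_integral_eq_lintegral_ofReal (gauss_lint p hp), gauss_int, Gp]
      exact Filter.Eventually.of_forall fun x => (Real.exp_pos _).le
    have Gn : ∀ p, 0 ≤ Gp p := fun p => Finset.prod_nonneg fun j _ => Real.sqrt_nonneg _
    apply main_perm (fun j => (a j ^ 2)⁻¹) (fun j => (b j ^ 2)⁻¹) hp hq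
    · have : ENNReal.ofReal (Gp fun j => (a j ^ 2)⁻¹) = ENNReal.ofReal (Gp fun j => (b j ^ 2)⁻¹) := by
        rw [G _ hp T₁, G _ hq T₂, s3.1]
      exact (ENNReal.ofReal_eq_ofReal_iff (Gn _) (Gn _)).1 this
    · rw [← item1' _ hp, ← item1' _ hq, item1 _ T₁, item1 _ T₂, s1.1]
    · rw [← item1' _ hp, item1 _ T₁]
      exact ENNReal.mul_lt_top (ENNReal.mul_lt_top s1.2 C3_lt) K1_lt
    · rw [← item4' _ hp, ← item4' _ hq, item4 _ hp T₁, item4 _ hq T₂, s4.1]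
    · rw [← item4' _ hp, item4 _ hp T₁]
      exact ENNReal.mul_lt_top (ENNReal.mul_lt_top s4.2 C3_lt) K2_lt
  obtain ⟨σ, hσ⟩ := key
  refine ⟨σ, fun j => ?_⟩
  have := inv_injective (hσ j)
  exact (pow_left_inj₀ (hb j).le (ha _).le two_ne_zero).1 this

lemma congr_of_perm (a b : Fin 3 → ℝ) (T₁ T₂ : E3 ≃ₗᵢ[ℝ] E3)
    (σ : Equiv.Perm (Fin 3)) (h : ∀ j, b j = a (σ j)) :
    ∃ T : E3 ≃ₗᵢ[ℝ] E3, T₂ '' ellipsoidSet b = T '' (T₁ '' ellipsoidSet a) := by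
  let P : E3 ≃ₗᵢ[ℝ] E3 := LinearIsometryEquiv.piLpCongrLeft 2 ℝ ℝ σ.symm
  have hP : ∀ x j, P x j = x (σ j) := fun x j => by
    simp [P, LinearIsometryEquiv.piLpCongrLeft_apply, Equiv.piCongrLeft']
  have hPi : P '' ellipsoidSet a = ellipsoidSet b := by
    have hmem : ∀ x, P x ∈ ellipsoidSet b ↔ x ∈ ellipsoidSet a := by
      intro x
      have : ∑ j, (P x j) ^ 2 / (b j) ^ 2 = ∑ j, (x j) ^ 2 / (a j) ^ 2 := by
        simp_rw [hP, h]
        exact Equiv.sum_comp σ (fun j => (x j) ^ 2 / (a j) ^ 2)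
      change ∑ j, (P x j) ^ 2 / (b j) ^ 2 ≤ 1 ↔ ∑ j, (x j) ^ 2 / (a j) ^ 2 ≤ 1
      rw [this]
    ext y
    constructor
    · rintro ⟨x, hx, rfl⟩
      exact (hmem x).2 hx
    · intro hy
      exact ⟨P.symm y, (hmem _).1 (by simpa using hy), by simp⟩
  refine ⟨(T₁.symm.trans P).trans T₂, ?_⟩
  rw [← hPi, Set.image_image, Set.image_image]
  simp

/-- Centered ellipsoids in `ℝ³` with equal dual volumes `Ṽ_{-1}`, `Ṽ_3` (i.e. equal volumes)
and `Ṽ_4` are congruent: their multisets of semiaxes coincide. This yields the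
Petrov–Tarasov theorem on intrinsic volumes `V₁, V₂, V₃` of ellipsoids in `ℝ³`. -/
theorem dualVolumes_determine_ellipsoid_dim3
    (a b : Fin 3 → ℝ) (ha : ∀ j, 0 < a j) (hb : ∀ j, 0 < b j)
    (T₁ T₂ : EuclideanSpace ℝ (Fin 3) ≃ₗᵢ[ℝ] EuclideanSpace ℝ (Fin 3))
    (E₁ E₂ : Set (EuclideanSpace ℝ (Fin 3)))
    (hE₁ : E₁ = T₁ '' ellipsoidSet a) (hE₂ : E₂ = T₂ '' ellipsoidSet b)
    (hm1 : dualVolume 3 (-1) E₁ = dualVolume 3 (-1) E₂)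
    (h3 : dualVolume 3 3 E₁ = dualVolume 3 3 E₂)
    (h4 : dualVolume 3 4 E₁ = dualVolume 3 4 E₂) :
    (∃ T : EuclideanSpace ℝ (Fin 3) ≃ₗᵢ[ℝ] EuclideanSpace ℝ (Fin 3), E₂ = T '' E₁) ∧
      ∃ σ : Equiv.Perm (Fin 3), ∀ j, b j = a (σ j) := by
  subst hE₁ hE₂
  obtain ⟨σ, hσ⟩ := dv_data a b ha hb T₁ T₂ hm1 h3 h4
  exact ⟨congr_of_perm a b T₁ T₂ σ hσ, σ, hσ⟩
end
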